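/- For any canonical states w, u ∈ W and any formula B^T_X φ ∈ F(w), if w ∼_X u and T ⊆ 𝒯_u, then φ ∈ F(u). -/

import Mathlib

/- Language: formulas over atomic propositions P, data variables V, actors 𝒜 = A.
   `bel T X φ` is B^T_X φ ; `str C T X φ` is [C]^T_X φ. -/
inductive Formula (P V A : Type) : Type
  | atom : P → Formula P V A
  | neg : Formula P V A → Formula P V A
  | imp : Formula P V A → Formula P V A → Formula P V A
  | bel : Set V → Set V → Formula P V A → Formula P V A
  | str : Set A → Set V → Set V → Formula P V A → Formula P V A

variable {P V A : Type}

/-- Propositional tautologies: true under every valuation respecting ¬ and →. -/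
def Tautology (φ : Formula P V A) : Prop :=
  ∀ v : Formula P V A → Prop,
    (∀ ψ, v (Formula.neg ψ) ↔ ¬ v ψ) →
    (∀ ψ χ, v (Formula.imp ψ χ) ↔ (v ψ → v χ)) →
    v φ

/-- Theorems of the logical system of doxastic strategies. -/
inductive Thm : Formula P V A → Prop
  | taut {φ : Formula P V A} : Tautology φ → Thm φ
  | truth {X : Set V} {φ : Formula P V A} :
      Thm (Formula.imp (Formula.bel ∅ X φ) φ)
  | negIntro {T X : Set V} {φ : Formula P V A} :
      Thm (Formula.imp (Formula.neg (Formula.bel T X φ))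
        (Formula.bel ∅ X (Formula.neg (Formula.bel T X φ))))
  | distrib {T X : Set V} {φ ψ : Formula P V A} :
      Thm (Formula.imp (Formula.bel T X (Formula.imp φ ψ))
        (Formula.imp (Formula.bel T X φ) (Formula.bel T X ψ)))
  | trust {T X Y : Set V} {φ : Formula P V A} :
      Thm (Formula.bel T X (Formula.imp (Formula.bel T Y φ) φ))
  | monoB {T T' X X' : Set V} {φ : Formula P V A} :
      T ⊆ T' → X ⊆ X' →
      Thm (Formula.imp (Formula.bel T X φ) (Formula.bel T' X' φ))
  | monoS {C C' : Set A} {T T' X X' : Set V} {φ : Formula P V A} :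
      T ⊆ T' → X ⊆ X' → C ⊆ C' →
      Thm (Formula.imp (Formula.str C T X φ) (Formula.str C' T' X' φ))
  | coop {C D : Set A} {T X : Set V} {φ ψ : Formula P V A} :
      C ∩ D = ∅ →
      Thm (Formula.imp (Formula.str C T X (Formula.imp φ ψ))
        (Formula.imp (Formula.str D T X φ) (Formula.str (C ∪ D) T X ψ)))
  | strIntro₁ {C : Set A} {T X : Set V} {φ : Formula P V A} :
      Thm (Formula.imp (Formula.str C T X φ) (Formula.bel T X (Formula.str C T X φ)))
  | strIntro₂ {C : Set A} {T X : Set V} {φ : Formula P V A} :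
      Thm (Formula.imp (Formula.bel T X (Formula.str C T X φ)) (Formula.str C T X φ))
  | unavoid {T X Y : Set V} {φ : Formula P V A} :
      Thm (Formula.imp (Formula.bel T X (Formula.str ∅ T Y φ)) (Formula.str ∅ T X φ))
  | pub {T : Set V} {φ : Formula P V A} :
      Thm (Formula.imp (Formula.bel T ∅ φ) (Formula.str ∅ T ∅ φ))
  | mp {φ ψ : Formula P V A} : Thm (Formula.imp φ ψ) → Thm φ → Thm ψ
  | nec {φ : Formula P V A} : Thm φ → Thm (Formula.bel ∅ ∅ φ)

/-- `Deduces F φ`: φ is derivable from F together with the theorems using only Modus Ponens. -/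
inductive Deduces (F : Set (Formula P V A)) : Formula P V A → Prop
  | thm {φ : Formula P V A} : Thm φ → Deduces F φ
  | mem {φ : Formula P V A} : φ ∈ F → Deduces F φ
  | mp {φ ψ : Formula P V A} :
      Deduces F (Formula.imp φ ψ) → Deduces F φ → Deduces F ψ

def Consistent (F : Set (Formula P V A)) : Prop :=
  ¬ ∃ φ : Formula P V A, Deduces F φ ∧ Deduces F (Formula.neg φ)

def MaximalConsistent (F : Set (Formula P V A)) : Prop :=
  Consistent F ∧ ∀ G : Set (Formula P V A), Consistent G → F ⊆ G → F = G

/-- A game. -/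
structure Game (P V A : Type) : Type 1 where
  W : Type
  sim : V → W → W → Prop
  sim_equiv : ∀ x : V, Equivalence (sim x)
  trust : W → Set V
  Δ : Type
  delta_nonempty : Nonempty Δ
  M : W → (A → Δ) → W → Prop
  pi : P → Set W

/-- `w ∼_X u`. -/
def Game.simSet (G : Game P V A) (X : Set V) (w u : G.W) : Prop :=
  ∀ x ∈ X, G.sim x w u

/-- The satisfaction relation `w ⊨ φ` (as `Sat G φ w`). -/
def Sat (G : Game P V A) : Formula P V A → G.W → Prop
  | Formula.atom p, w => w ∈ G.pi p
  | Formula.neg φ, w => ¬ Sat G φ w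
  | Formula.imp φ ψ, w => Sat G φ w → Sat G ψ w
  | Formula.bel T X φ, w =>
      ∀ u : G.W, G.simSet X w u → T ⊆ G.trust u → Sat G φ u
  | Formula.str C T X φ, w =>
      ∃ s : {a : A // a ∈ C} → G.Δ,
        ∀ (u v : G.W) (δ : A → G.Δ),
          G.simSet X w u → T ⊆ G.trust u →
          (∀ (a : A) (h : a ∈ C), s ⟨a, h⟩ = δ a) →
          G.M u δ v → T ⊆ G.trust v → Sat G φ v

/- ===================== Canonical game ===================== -/

/-- One block `X_i, b_i, T_i, F_i` of a canonical state. -/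
structure Block (P V A B : Type) where
  X : Set V
  b : B
  T : Set V
  F : Set (Formula P V A)

variable {B : Type}

/-- `F(w)`: the last set of formulae of the sequence (or `F0` for the root). -/
def cF (F0 : Set (Formula P V A)) (l : List (Block P V A B)) : Set (Formula P V A) :=
  l.getLast?.elim F0 Block.F

/-- `𝒯_w = T(w)`: the last dataset of the sequence (or `T0` for the root). -/
def cTrust (T0 : Set V) (l : List (Block P V A B)) : Set V :=
  l.getLast?.elim T0 Block.T

/-- Membership of a sequence in the set of canonical states `W`. -/
inductive IsState (T0 : Set V) (F0 : Set (Formula P V A)) :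
    List (Block P V A B) → Prop
  | nil :
      (∀ (Y : Set V) (ψ : Formula P V A),
        Formula.imp (Formula.bel T0 Y ψ) ψ ∈ F0) →
      IsState T0 F0 []
  | snoc {l : List (Block P V A B)} {bl : Block P V A B} :
      IsState T0 F0 l →
      MaximalConsistent bl.F →
      (∀ φ : Formula P V A, Formula.bel ∅ bl.X φ ∈ cF F0 l → φ ∈ bl.F) →
      (∀ (Y : Set V) (ψ : Formula P V A),
        Formula.imp (Formula.bel bl.T Y ψ) ψ ∈ bl.F) →
      IsState T0 F0 (l ++ [bl])

/-- The canonical states. -/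
def CState (T0 : Set V) (F0 : Set (Formula P V A)) (B : Type) : Type :=
  {l : List (Block P V A B) // IsState T0 F0 l}

attribute [local instance] Classical.propDecidable

/-- Length of the longest common prefix of two sequences. -/
noncomputable def cpl {α : Type} : List α → List α → Nat
  | a :: as, b :: bs => if a = b then cpl as bs + 1 else 0
  | _, _ => 0

/-- The blocks labelling the edges on the unique simple path between two
nodes of the canonical tree. -/
noncomputable def pathBlocks (w u : List (Block P V A B)) : List (Block P V A B) :=
  w.drop (cpl w u) ++ u.drop (cpl w u)

/-- `w ∼_x u` in the canonical game: every edge along the unique simple path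
between `w` and `u` is labelled with `x`. -/
def csimVar (x : V) (w u : List (Block P V A B)) : Prop :=
  ∀ bl ∈ pathBlocks w u, x ∈ bl.X

/-- `w ∼_X u` in the canonical game. -/
def csim (X : Set V) (w u : List (Block P V A B)) : Prop :=
  ∀ x ∈ X, csimVar x w u

/-- The canonical mechanism `M`. -/
def Mech (T0 : Set V) (F0 : Set (Formula P V A))
    (w : CState T0 F0 B) (δ : A → Formula P V A × CState T0 F0 B)
    (v : CState T0 F0 B) : Prop :=
  ∀ (C : Set A) (T X : Set V) (φ : Formula P V A),
    Formula.str C T X φ ∈ cF F0 w.1 →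
    (∀ a ∈ C, (δ a).1 = φ) →
    (∀ a ∈ C, csim X w.1 (δ a).2.1) →
    T ⊆ cTrust T0 w.1 → T ⊆ cTrust T0 v.1 →
    φ ∈ cF F0 v.1

/-- Satisfaction `w ⊨ φ` on the canonical game (as `CSat T0 F0 φ w`). -/
def CSat (T0 : Set V) (F0 : Set (Formula P V A)) :
    Formula P V A → CState T0 F0 B → Prop
  | Formula.atom p, w => Formula.atom p ∈ cF F0 w.1
  | Formula.neg φ, w => ¬ CSat T0 F0 φ w
  | Formula.imp φ ψ, w => CSat T0 F0 φ w → CSat T0 F0 ψ w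
  | Formula.bel T X φ, w =>
      ∀ u : CState T0 F0 B, csim X w.1 u.1 → T ⊆ cTrust T0 u.1 → CSat T0 F0 φ u
  | Formula.str C T X φ, w =>
      ∃ s : {a : A // a ∈ C} → Formula P V A × CState T0 F0 B,
        ∀ (u v : CState T0 F0 B) (δ : A → Formula P V A × CState T0 F0 B),
          csim X w.1 u.1 → T ⊆ cTrust T0 u.1 →
          (∀ (a : A) (h : a ∈ C), s ⟨a, h⟩ = δ a) →
          Mech T0 F0 u δ v → T ⊆ cTrust T0 v.1 → CSat T0 F0 φ v

/- ===================== Harmony ===================== -/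

/-- Conjunction definable from ¬ and →. -/
def fand (φ ψ : Formula P V A) : Formula P V A :=
  Formula.neg (Formula.imp φ (Formula.neg ψ))

/-- A canonical tautology (verum). -/
noncomputable def verum (P V A : Type) [Nonempty (Formula P V A)] : Formula P V A :=
  Formula.imp (Classical.arbitrary (Formula P V A)) (Classical.arbitrary (Formula P V A))

/-- Conjunction of a finite list of formulae. -/
noncomputable def conjList [Nonempty (Formula P V A)] :
    List (Formula P V A) → Formula P V A
  | [] => verum P V A
  | φ :: l => fand φ (conjList l)

/-- The pair `(F, G)` is in `T`-harmony: `F ⊬ [∅]^T_V ¬⋀G'` for each finite `G' ⊆ G`. -/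
def THarmony [Nonempty (Formula P V A)] (T : Set V)
    (F G : Set (Formula P V A)) : Prop :=
  ∀ l : List (Formula P V A), (∀ ψ ∈ l, ψ ∈ G) →
    ¬ Deduces F (Formula.str ∅ T (Set.univ : Set V) (Formula.neg (conjList l)))

theorem ded_cut {F : Set (Formula P V A)} {ψ χ : Formula P V A} (h : Deduces F ψ)
    (h' : Deduces (insert ψ F) χ) : Deduces F χ := by
  induction h' with
  | thm t => exact .thm t
  | mem m =>
    rcases m with rfl | m
    · exact h
    · exact .mem m
  | mp _ _ a b => exact .mp a b

theorem ded_thm {F : Set (Formula P V A)} {ψ χ : Formula P V A}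
    (h' : Deduces (insert ψ F) χ) : Deduces F (.imp ψ χ) := by
  have K : ∀ a b : Formula P V A, Deduces F (.imp a (.imp b a)) := fun a b =>
    .thm (.taut (by intro v _ hi; simp only [hi]; tauto))
  induction h' with
  | @thm c t => exact .mp (K _ _) (.thm t)
  | @mem c m =>
    rcases m with rfl | m
    · exact .thm (.taut (by intro v _ hi; simp only [hi]; tauto))
    · exact .mp (K _ _) (.mem m)
  | @mp a b _ _ ha hb =>
    have S : Deduces F (.imp (.imp ψ (.imp a b)) (.imp (.imp ψ a) (.imp ψ b))) :=
      .thm (.taut (by intro v _ hi; simp only [hi]; tauto))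
    exact .mp (.mp S ha) hb

theorem mcs_closed {F : Set (Formula P V A)} (hF : MaximalConsistent F) {ψ : Formula P V A}
    (h : Deduces F ψ) : ψ ∈ F := by
  have hc : Consistent (insert ψ F) := by
    rintro ⟨χ, h1, h2⟩
    exact hF.1 ⟨χ, ded_cut h h1, ded_cut h h2⟩
  rw [hF.2 _ hc (Set.subset_insert _ _)]
  exact Set.mem_insert _ _

theorem mcs_mp {F : Set (Formula P V A)} (hF : MaximalConsistent F) {ψ χ : Formula P V A}
    (t : Thm (.imp ψ χ)) (h : ψ ∈ F) : χ ∈ F :=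
  mcs_closed hF (.mp (.thm t) (.mem h))

theorem mcs_neg {F : Set (Formula P V A)} (hF : MaximalConsistent F) {ψ : Formula P V A}
    (h : ψ ∉ F) : Formula.neg ψ ∈ F := by
  have hc : ¬ Consistent (insert ψ F) := by
    intro hc
    apply h
    rw [hF.2 _ hc (Set.subset_insert _ _)]
    exact Set.mem_insert _ _
  obtain ⟨χ, h1, h2⟩ := not_not.1 hc
  refine mcs_closed hF (.mp (.mp (.thm (.taut ?_)) (ded_thm h1)) (ded_thm h2))
  intro v hn hi
  simp only [hi, hn]
  tauto

theorem thm_trans {a b c : Formula P V A} (h : Thm (.imp a b)) (h' : Thm (.imp b c)) :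
    Thm (.imp a c) := by
  have S : Thm (.imp (.imp a b) (.imp (.imp b c) (.imp a c))) :=
    .taut (by intro v _ hi; simp only [hi]; tauto)
  exact .mp (.mp S h) h'

theorem pos_intro (T X : Set V) (φ : Formula P V A) :
    Thm (.imp (.bel T X φ) (.bel ∅ X (.bel T X φ))) := by
  have h1 : Thm (.imp (.bel T X φ) (.neg (.bel ∅ X (.neg (.bel T X φ))))) := by
    have S : Thm (.imp (.imp (.bel ∅ X (.neg (.bel T X φ))) (.neg (.bel T X φ)))
      (.imp (.bel T X φ) (.neg (.bel ∅ X (.neg (.bel T X φ)))))) :=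
      .taut (by intro v hn hi; simp only [hi, hn]; tauto)
    exact .mp S .truth
  have h2 : Thm (.imp (.neg (.bel ∅ X (.neg (.bel T X φ)))) (.bel T X φ)) := by
    have S : Thm (.imp (.imp (.neg (.bel T X φ)) (.bel ∅ X (.neg (.bel T X φ))))
      (.imp (.neg (.bel ∅ X (.neg (.bel T X φ)))) (.bel T X φ))) :=
      .taut (by intro v hn hi; simp only [hi, hn]; tauto)
    exact .mp S .negIntro
  exact thm_trans (thm_trans h1 .negIntro)
    (.mp .distrib (.mp (.monoB (Set.Subset.refl _) (Set.empty_subset _)) (.nec h2)))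

theorem snoc_inv {T0 : Set V} {F0 : Set (Formula P V A)} {l : List (Block P V A B)}
    {bl : Block P V A B} (h : IsState T0 F0 (l ++ [bl])) :
    IsState T0 F0 l ∧ MaximalConsistent bl.F ∧
    (∀ φ : Formula P V A, Formula.bel ∅ bl.X φ ∈ cF F0 l → φ ∈ bl.F) ∧
    (∀ (Y : Set V) (ψ : Formula P V A), Formula.imp (Formula.bel bl.T Y ψ) ψ ∈ bl.F) := by
  generalize he : l ++ [bl] = m at h
  cases h with
  | nil _ => simp at he
  | snoc a b c d =>
    obtain ⟨rfl, h2⟩ := List.append_inj' he rfl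
    cases h2
    exact ⟨a, b, c, d⟩

theorem cF_snoc (F0 : Set (Formula P V A)) (l : List (Block P V A B)) (bl : Block P V A B) :
    cF F0 (l ++ [bl]) = bl.F := by simp [cF]

theorem state_mcs {T0 : Set V} {F0 : Set (Formula P V A)} (hF0 : MaximalConsistent F0)
    {l : List (Block P V A B)} (h : IsState T0 F0 l) : MaximalConsistent (cF F0 l) := by
  cases h with
  | nil _ => simpa [cF] using hF0
  | snoc a b c d => rwa [cF_snoc]

theorem state_trust {T0 : Set V} {F0 : Set (Formula P V A)}
    {l : List (Block P V A B)} (h : IsState T0 F0 l) (Y : Set V) (ψ : Formula P V A) :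
    Formula.imp (Formula.bel (cTrust T0 l) Y ψ) ψ ∈ cF F0 l := by
  cases h with
  | nil h => simpa [cF, cTrust] using h Y ψ
  | snoc a b c d => simpa [cF, cTrust] using d Y ψ

theorem bel_path {T0 : Set V} {F0 : Set (Formula P V A)} (hF0 : MaximalConsistent F0)
    (T X : Set V) (φ : Formula P V A) (l m : List (Block P V A B)) :
    IsState T0 F0 (l ++ m) → (∀ bl ∈ m, X ⊆ bl.X) →
    (Formula.bel T X φ ∈ cF F0 l ↔ Formula.bel T X φ ∈ cF F0 (l ++ m)) := by
  induction m using List.reverseRecOn with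
  | nil => simp
  | append_singleton m bl ih =>
    intro hs hX
    rw [← List.append_assoc] at hs ⊢
    obtain ⟨a, b, c, -⟩ := snoc_inv hs
    rw [ih a (fun x hx => hX x (by simp [hx])), cF_snoc]
    have hm := state_mcs hF0 a
    have hx : X ⊆ bl.X := hX bl (by simp)
    constructor
    · intro h
      exact c _ (mcs_mp hm (.monoB (Set.Subset.refl _) hx) (mcs_mp hm (pos_intro T X φ) h))
    · intro h
      by_contra hn
      have := c _ (mcs_mp hm (.monoB (Set.Subset.refl _) hx)
        (mcs_mp hm .negIntro (mcs_neg hm hn)))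
      exact b.1 ⟨_, .mem h, .mem this⟩

theorem take_cpl {α : Type} : ∀ w u : List α, w.take (cpl w u) = u.take (cpl w u)
  | [], u => by simp [cpl]
  | a :: as, [] => by simp [cpl]
  | a :: as, b :: bs => by
    by_cases h : a = b
    · simp [cpl, h, take_cpl as bs]
    · simp [cpl, h]

/-- for canonical states w, u and any B^T_X φ ∈ F(w), if w ∼_X u and
T ⊆ 𝒯_u, then φ ∈ F(u). -/
theorem belief_child_all {P V A B : Type}
    (T0 : Set V) (F0 : Set (Formula P V A))
    (hF0 : MaximalConsistent F0) (hB : Cardinal.mk A < Cardinal.mk B)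
    (w u : CState T0 F0 B) (T X : Set V) (φ : Formula P V A)
    (h : Formula.bel T X φ ∈ cF F0 w.1)
    (hsim : csim X w.1 u.1) (hT : T ⊆ cTrust T0 u.1) :
    φ ∈ cF F0 u.1 := by
  obtain ⟨w, hw⟩ := w
  obtain ⟨u, hu⟩ := u
  simp only at h hsim hT ⊢
  have hX : ∀ bl ∈ pathBlocks w u, X ⊆ bl.X := fun bl hb x hx => hsim x hx bl hb
  have ew := List.take_append_drop (cpl w u) w
  have eu := List.take_append_drop (cpl w u) u
  have h1 := bel_path hF0 T X φ (w.take (cpl w u)) (w.drop (cpl w u)) (by rwa [ew])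
    (fun bl hb => hX bl (List.mem_append_left _ hb))
  have h2 := bel_path hF0 T X φ (u.take (cpl w u)) (u.drop (cpl w u)) (by rwa [eu])
    (fun bl hb => hX bl (List.mem_append_right _ hb))
  rw [ew] at h1
  rw [eu, ← take_cpl w u] at h2
  have hm := state_mcs hF0 hu
  have h3 := mcs_mp hm (.monoB hT (Set.Subset.refl _)) (h2.1 (h1.2 h))
  exact mcs_closed hm (.mp (.mem (state_trust hu X φ)) (.mem h3))
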